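/- Let p > 5, let N ≥ 2 be an integer, let α < 0 and ω > α²/N², and define φ : [0,∞) → ℝ by φ(x) = (((p+1)ω/2)·sech²(((p−1)√ω/2)·x − arctanh(α/(N√ω))))^{1/(p−1)}. Let A be the set of continuously differentiable functions v : [0,∞) → ℂ such that ∫₀^∞|v|²dx, ∫₀^∞|v'|²dx and ∫₀^∞|v|^{p+1}dx are all finite, and for v ∈ A define S_ω(v) = N·((1/2)∫₀^∞|v'|²dx + (ω/2)∫₀^∞|v|²dx − (1/(p+1))∫₀^∞|v|^{p+1}dx) + (α/2)|v(0)|², I_ω(v) = N·(∫₀^∞|v'|²dx + ω∫₀^∞|v|²dx − ∫₀^∞|v|^{p+1}dx) + α|v(0)|², and P(v) = N·(∫₀^∞|v'|²dx − ((p−1)/(2(p+1)))∫₀^∞|v|^{p+1}dx) + (α/2)|v(0)|². Set d = inf { S_ω(v) : v ∈ A, v not identically zero, I_ω(v) = 0 }, and assume: (i) the variational characterization d = ((p−1)/(2(p+1)))·N·∫₀^∞ φ^{p+1} dx, and (ii) the second-derivative condition ∫₀^∞ φ'² dx ≤ ((p−1)(p−3)/(4(p+1)))·∫₀^∞ φ^{p+1}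 dx. Then every v ∈ A satisfying ∫₀^∞|v|²dx ≤ ∫₀^∞ φ²dx, ∫₀^∞|v|^{p+1}dx > ∫₀^∞ φ^{p+1}dx and P(v) ≤ 0 obeys d ≤ S_ω(v) − (1/2)·P(v). -/

import Mathlib

open MeasureTheory Real Set Filter Topology

/-- Inverse hyperbolic tangent. -/
noncomputable def arctanh (x : ℝ) : ℝ := Real.log ((1 + x) / (1 - x)) / 2

/-- Membership in the admissible class `A`: continuously differentiable on `[0,∞)` with
`|v|²`, `|v'|²` and `|v|^{p+1}` integrable on `(0,∞)`. -/
def MemA (p : ℝ) (v : ℝ → ℂ) : Prop :=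
  ContDiffOn ℝ 1 v (Set.Ici 0) ∧
  MeasureTheory.IntegrableOn (fun x => ‖v x‖ ^ 2) (Set.Ioi 0) ∧
  MeasureTheory.IntegrableOn (fun x => ‖deriv v x‖ ^ 2) (Set.Ioi 0) ∧
  MeasureTheory.IntegrableOn (fun x => ‖v x‖ ^ (p + 1)) (Set.Ioi 0)

/-- The action functional `S_ω`. -/
noncomputable def Sfun (p α ω : ℝ) (N : ℕ) (v : ℝ → ℂ) : ℝ :=
  (N : ℝ) * ((1 / 2) * (∫ x in Set.Ioi (0 : ℝ), ‖deriv v x‖ ^ 2)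
      + (ω / 2) * (∫ x in Set.Ioi (0 : ℝ), ‖v x‖ ^ 2)
      - (1 / (p + 1)) * (∫ x in Set.Ioi (0 : ℝ), ‖v x‖ ^ (p + 1)))
    + (α / 2) * ‖v 0‖ ^ 2

/-- The Nehari functional `I_ω`. -/
noncomputable def Ifun (p α ω : ℝ) (N : ℕ) (v : ℝ → ℂ) : ℝ :=
  (N : ℝ) * ((∫ x in Set.Ioi (0 : ℝ), ‖deriv v x‖ ^ 2)
      + ω * (∫ x in Set.Ioi (0 : ℝ), ‖v x‖ ^ 2)
      - (∫ x in Set.Ioi (0 : ℝ), ‖v x‖ ^ (p + 1)))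
    + α * ‖v 0‖ ^ 2

/-- The virial functional `P`. -/
noncomputable def Pfun (p α : ℝ) (N : ℕ) (v : ℝ → ℂ) : ℝ :=
  (N : ℝ) * ((∫ x in Set.Ioi (0 : ℝ), ‖deriv v x‖ ^ 2)
      - (p - 1) / (2 * (p + 1)) * (∫ x in Set.Ioi (0 : ℝ), ‖v x‖ ^ (p + 1)))
    + (α / 2) * ‖v 0‖ ^ 2


lemma calc_bernoulli (r l : ℝ) (hr : 0 ≤ r) (hl : 0 < l) : l ^ r * (1 + r * (1 - l)) ≤ 1 := by
  have h1 : Real.log l ≤ l - 1 := Real.log_le_sub_one_of_pos hl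
  have h2 : 1 + r * (1 - l) ≤ Real.exp (r * (1 - l)) := by
    have := Real.add_one_le_exp (r * (1 - l)); linarith
  have h3 : Real.exp (r * (1 - l)) ≤ Real.exp (- (Real.log l * r)) := by
    apply Real.exp_le_exp.mpr; nlinarith
  have h4 : l ^ r = Real.exp (Real.log l * r) := Real.rpow_def_of_pos hl r
  calc l ^ r * (1 + r * (1 - l)) ≤ l ^ r * Real.exp (- (Real.log l * r)) := by
        gcongr; exact h2.trans h3
    _ = 1 := by rw [h4, ← Real.exp_add]; simp

lemma calc_F (q l : ℝ) (hq : 2 < q) (hl : 0 < l) (hl1 : l ≤ 1) :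
    0 ≤ 2 * (q - 2) - 2 * (q - 1) * l
      + l ^ (q - 1) * (2 - (q - 1) * (q - 2) * (1 - l) ^ 2) := by
  set F : ℝ → ℝ := fun l => 2 * (q - 2) - 2 * (q - 1) * l
      + l ^ (q - 1) * (2 - (q - 1) * (q - 2) * (1 - l) ^ 2) with hF
  have hd : ∀ x : ℝ, 0 < x → HasDerivAt F (- (2 * (q - 1) * 1)
      + (((q - 1) * x ^ (q - 1 - 1)) * (2 - (q - 1) * (q - 2) * (1 - x) ^ 2)
        + x ^ (q - 1) * (- ((q - 1) * (q - 2) * (((2 : ℕ) : ℝ) * (1 - x) ^ (2 - 1) * (-1)))))) x := by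
    intro x hx
    have e1 := ((hasDerivAt_id x).const_mul (2 * (q - 1))).const_sub (2 * (q - 2))
    have e2 := Real.hasDerivAt_rpow_const (x := x) (p := q - 1) (Or.inl hx.ne')
    have e3 := ((((hasDerivAt_id x).const_sub 1).pow 2).const_mul ((q - 1) * (q - 2))).const_sub 2
    exact e1.add (e2.mul e3)
  have hanti : AntitoneOn F (Icc l 1) := by
    apply antitoneOn_of_deriv_nonpos (convex_Icc l 1)
    · intro x hx
      exact (hd x (hl.trans_le hx.1)).continuousAt.continuousWithinAt
    · intro x hx
      rw [interior_Icc] at hx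
      exact (hd x (hl.trans hx.1)).differentiableAt.differentiableWithinAt
    · intro x hx
      rw [interior_Icc] at hx
      have hx0 : 0 < x := hl.trans hx.1
      rw [(hd x hx0).deriv]
      have hb := calc_bernoulli (q - 2) x (by linarith) hx0
      have hxr : x ^ (q - 1) = x ^ (q - 2) * x := by
        rw [← Real.rpow_add_one hx0.ne']; congr 1; ring
      have hxr2 : x ^ (q - 1 - 1) = x ^ (q - 2) := by congr 1; ring
      rw [hxr, hxr2]
      have hpos : 0 < x ^ (q - 2) := Real.rpow_pos_of_pos hx0 _
      set R := x ^ (q - 2)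
      have key : 0 ≤ R * (1 - x) ^ 2 * ((q - 2) * (q - 1) + 2 * (q - 2)) := by
        have : 0 < (q - 2) * (q - 1) + 2 * (q - 2) := by nlinarith
        positivity
      have e : - (2 * (q - 1) * 1)
      + (((q - 1) * R) * (2 - (q - 1) * (q - 2) * (1 - x) ^ 2)
        + R * x * (- ((q - 1) * (q - 2) * (((2 : ℕ) : ℝ) * (1 - x) ^ (2 - 1) * (-1))))) =
        (q - 1) * (2 * (R * (1 + (q - 2) * (1 - x)) - 1)
          - R * (1 - x) ^ 2 * ((q - 2) * (q - 1) + 2 * (q - 2))) := by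
        push_cast; norm_num; ring
      rw [e]
      apply mul_nonpos_of_nonneg_of_nonpos <;> linarith
  have := hanti (left_mem_Icc.mpr hl1) (right_mem_Icc.mpr hl1) hl1
  have h1 : F 1 = 0 := by simp [hF]; ring
  rw [h1] at this
  exact this

lemma calc_final (q l R A A0 M M0 B B0 C C0 α ω n : ℝ) (hq : 2 < q) (hl : 0 < l) (hl1 : l ≤ 1)
    (hn : 0 < n) (hω : 0 < ω)
    (hR : 0 ≤ 2 * (q - 2) - 2 * (q - 1) * l + R * (2 - (q - 1) * (q - 2) * (1 - l) ^ 2))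
    (hB : 0 < B) (hB0 : B0 = l * R * B)
    (e1 : A0 = ω * M0 - 1 / (q + 1) * B0)
    (e2 : n * (A0 + ω * M0 - B0) + α * C0 = 0)
    (h2 : A0 ≤ q * (q - 1) / (2 * q + 2) * B0)
    (hM : M ≤ M0)
    (hI : 0 ≤ n * (l ^ 2 * A + ω * M - B0) + α * (l * C))
    (hP : n * (A - q / (2 * q + 2) * B) + α / 2 * C ≤ 0) :
    q / (2 * q + 2) * n * B0 ≤ n * ((1 / 2) * A + ω / 2 * M - 1 / (2 * q + 2) * B) + α / 2 * C
      - 1 / 2 * (n * (A - q / (2 * q + 2) * B) + α / 2 * C) := by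
  obtain ⟨b, hb⟩ : ∃ b, b = n * B / (2 * q + 2) := ⟨_, rfl⟩
  have hbpos : 0 < b := by rw [hb]; positivity
  have hnB : n * B = (2 * q + 2) * b := by rw [hb]; field_simp
  have f1 : n * (q / (2 * q + 2) * B) = q * b := by rw [hb]; ring
  have f2 : n * (1 / (2 * q + 2) * B) = b := by rw [hb]; ring
  have hnB0 : n * B0 = (2 * q + 2) * (l * R * b) := by rw [hB0]; linear_combination l * R * hnB
  have f3 : n * (q * (q - 1) / (2 * q + 2) * B0) = q * (q - 1) * (l * R * b) := by
    rw [hB0, hb]; ring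
  have f4 : n * (1 / (q + 1) * B0) = 2 * (l * R * b) := by
    rw [hB0, hb]; field_simp
  have f5 : q / (2 * q + 2) * n * B0 = q * (l * R * b) := by
    rw [hB0, hb]; ring
  have hP' : n * A - q * b + α / 2 * C ≤ 0 := by linarith
  have h2' : n * A0 ≤ q * (q - 1) * (l * R * b) := by
    rw [← f3]; exact mul_le_mul_of_nonneg_left h2 hn.le
  have e1' : n * A0 = n * ω * M0 - 2 * (l * R * b) := by rw [← f4, e1]; ring
  have hM' : n * ω * M ≤ n * ω * M0 := by gcongr
  have hI' : 0 ≤ l ^ 2 * (n * A) + n * ω * M - (2 * q + 2) * (l * R * b) + α * (l * C) := by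
    rw [← hnB0]; linarith
  have s0 : (-α * C) * (2 - l) * l ≤ 2 * b * q * (l + (q - 3) * R) * l := by
    have : l ^ 2 * (n * A) ≤ l ^ 2 * (q * b - α / 2 * C) := by gcongr; linarith
    linarith
  have s1 : (-α * C) * (2 - l) ≤ 2 * b * q * (l + (q - 3) * R) := le_of_mul_le_mul_right s0 hl
  have s2 : (-α * C) * (1 - l) ^ 2 * (2 - l) ≤ 2 * b * (2 * (l * R) - q * l ^ 2 - 2 + q) * (2 - l) := by
    have t1 := mul_le_mul_of_nonneg_right s1 (sq_nonneg (1 - l))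
    have t2 := mul_nonneg hbpos.le hR
    linarith
  have s3 : (-α * C) * (1 - l) ^ 2 ≤ 2 * b * (2 * (l * R) - q * l ^ 2 - 2 + q) :=
    le_of_mul_le_mul_right s2 (by linarith)
  have s4 : l ^ 2 * (n * A - q * b + α / 2 * C) ≤ 0 := mul_nonpos_of_nonneg_of_nonpos (by positivity) hP'
  rw [f5]
  have : n * ((1 / 2) * A + ω / 2 * M - 1 / (2 * q + 2) * B) + α / 2 * C
      - 1 / 2 * (n * (A - q / (2 * q + 2) * B) + α / 2 * C) =
      n * ω * M / 2 - b + q * b / 2 + α / 4 * C := by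
    linear_combination (-1 : ℝ) * f2 + 1 / 2 * f1
  rw [this]
  linarith

lemma trace_ineq (p : ℝ) (v : ℝ → ℂ) (hv : MemA p v) (s : ℝ) (hs : 0 < s) :
    ‖v 0‖ ^ 2 ≤ s * (∫ x in Set.Ioi (0 : ℝ), ‖v x‖ ^ 2)
      + s⁻¹ * (∫ x in Set.Ioi (0 : ℝ), ‖deriv v x‖ ^ 2) := by
  obtain ⟨hc, h2, hd, -⟩ := hv
  have hder : ∀ x ∈ Ioi (0 : ℝ), HasDerivAt v (deriv v x) x := fun x hx =>
    ((hc.differentiableOn one_ne_zero).differentiableAt (Ici_mem_nhds hx)).hasDerivAt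
  have hder2 : ∀ x ∈ Ioi (0 : ℝ), HasDerivAt (fun x => ‖v x‖ ^ 2) (2 * inner ℝ (v x) (deriv v x)) x :=
    fun x hx => (hder x hx).norm_sq
  have hcv : ContinuousOn v (Ioi 0) := hc.continuousOn.mono Ioi_subset_Ici_self
  have hcd : ContinuousOn (deriv v) (Ioi 0) :=
    (hc.mono Ioi_subset_Ici_self).continuousOn_deriv_of_isOpen isOpen_Ioi le_rfl
  have hb : ∀ x, |2 * inner ℝ (v x) (deriv v x)| ≤ s * ‖v x‖ ^ 2 + s⁻¹ * ‖deriv v x‖ ^ 2 := by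
    intro x
    have h1 := abs_real_inner_le_norm (v x) (deriv v x)
    rw [abs_mul, abs_two]
    have h3 : 0 ≤ s⁻¹ * (s * ‖v x‖ - ‖deriv v x‖) ^ 2 := by positivity
    have h4 : s⁻¹ * (s * ‖v x‖ - ‖deriv v x‖) ^ 2 =
      s * ‖v x‖ ^ 2 + s⁻¹ * ‖deriv v x‖ ^ 2 - 2 * (‖v x‖ * ‖deriv v x‖) := by
      field_simp; ring
    linarith
  have hgi : IntegrableOn (fun x => s * ‖v x‖ ^ 2 + s⁻¹ * ‖deriv v x‖ ^ 2) (Ioi 0) :=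
    (h2.const_mul s).add (hd.const_mul s⁻¹)
  have hfi : IntegrableOn (fun x => 2 * inner ℝ (v x) (deriv v x)) (Ioi 0) := by
    refine Integrable.mono' hgi ?_ (Eventually.of_forall hb)
    exact (continuousOn_const.mul (hcv.inner hcd)).aestronglyMeasurable measurableSet_Ioi
  have ht := tendsto_zero_of_hasDerivAt_of_integrableOn_Ioi hder2 hfi h2
  have hitg := integral_Ioi_of_hasDerivAt_of_tendsto
    ((hc.continuousOn 0 self_mem_Ici).norm.pow 2) hder2 hfi ht
  have hle : |∫ x in Ioi (0 : ℝ), 2 * inner ℝ (v x) (deriv v x)| ≤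
      ∫ x in Ioi (0 : ℝ), (s * ‖v x‖ ^ 2 + s⁻¹ * ‖deriv v x‖ ^ 2) :=
    (abs_integral_le_integral_abs).trans (integral_mono hfi.abs hgi hb)
  have hitg' : ∫ x in Ioi (0 : ℝ), 2 * inner ℝ (v x) (deriv v x) = 0 - ‖v 0‖ ^ 2 := hitg
  rw [hitg', integral_add (h2.const_mul s) (hd.const_mul s⁻¹), integral_const_mul,
    integral_const_mul] at hle
  have := neg_abs_le (0 - ‖v 0‖ ^ 2)
  linarith

lemma scale_facts (p : ℝ) (v : ℝ → ℂ) (hv : MemA p v) (c μ : ℝ) (hc : 0 < c) (hμ : 0 < μ) :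
    MemA p (fun x => (c : ℂ) * v (μ * x)) ∧
    (∫ x in Set.Ioi (0 : ℝ), ‖(c : ℂ) * v (μ * x)‖ ^ 2) =
      c ^ 2 * μ⁻¹ * ∫ x in Set.Ioi (0 : ℝ), ‖v x‖ ^ 2 ∧
    (∫ x in Set.Ioi (0 : ℝ), ‖deriv (fun x => (c : ℂ) * v (μ * x)) x‖ ^ 2) =
      c ^ 2 * μ * ∫ x in Set.Ioi (0 : ℝ), ‖deriv v x‖ ^ 2 ∧
    (∫ x in Set.Ioi (0 : ℝ), ‖(c : ℂ) * v (μ * x)‖ ^ (p + 1)) =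
      c ^ (p + 1) * μ⁻¹ * ∫ x in Set.Ioi (0 : ℝ), ‖v x‖ ^ (p + 1) := by
  obtain ⟨hcd, h2, hd, hp⟩ := hv
  have hnc : ‖(c : ℂ)‖ = c := by simp [abs_of_pos hc]
  have E1 : (fun x => ‖(c : ℂ) * v (μ * x)‖ ^ 2) = fun x => c ^ 2 * ‖v (μ * x)‖ ^ 2 := by
    funext x; rw [norm_mul, hnc, mul_pow]
  have E2 : (fun x => ‖deriv (fun x => (c : ℂ) * v (μ * x)) x‖ ^ 2) =
      fun x => (c ^ 2 * μ ^ 2) * ‖deriv v (μ * x)‖ ^ 2 := by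
    funext x
    rw [deriv_const_mul_field, deriv_comp_mul_left, norm_mul, hnc, norm_smul, Real.norm_of_nonneg hμ.le]
    ring
  have E3 : (fun x => ‖(c : ℂ) * v (μ * x)‖ ^ (p + 1)) =
      fun x => c ^ (p + 1) * ‖v (μ * x)‖ ^ (p + 1) := by
    funext x; rw [norm_mul, hnc, Real.mul_rpow hc.le (norm_nonneg _)]
  refine ⟨⟨?_, ?_, ?_, ?_⟩, ?_, ?_, ?_⟩
  · refine contDiffOn_const.mul (hcd.comp (contDiff_const.mul contDiff_id).contDiffOn ?_)
    intro x hx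
    exact mul_nonneg hμ.le hx
  · rw [E1]
    refine Integrable.const_mul ?_ _
    exact (integrableOn_Ioi_comp_mul_left_iff (fun x => ‖v x‖ ^ 2) 0 hμ).mpr (by simpa using h2)
  · rw [E2]
    refine Integrable.const_mul ?_ _
    exact (integrableOn_Ioi_comp_mul_left_iff (fun x => ‖deriv v x‖ ^ 2) 0 hμ).mpr (by simpa using hd)
  · rw [E3]
    refine Integrable.const_mul ?_ _
    exact (integrableOn_Ioi_comp_mul_left_iff (fun x => ‖v x‖ ^ (p + 1)) 0 hμ).mpr (by simpa using hp)
  · rw [E1, integral_const_mul, integral_comp_mul_left_Ioi (fun x => ‖v x‖ ^ 2) 0 hμ]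
    simp [mul_assoc]
  · rw [E2, integral_const_mul, integral_comp_mul_left_Ioi (fun x => ‖deriv v x‖ ^ 2) 0 hμ]
    simp only [mul_zero, smul_eq_mul]
    field_simp
  · rw [E3, integral_const_mul, integral_comp_mul_left_Ioi (fun x => ‖v x‖ ^ (p + 1)) 0 hμ]
    simp [mul_assoc]

lemma nonzero_of_B (p : ℝ) (hp : 5 < p) (v : ℝ → ℂ) (hv : MemA p v)
    (hB : 0 < ∫ x in Set.Ioi (0 : ℝ), ‖v x‖ ^ (p + 1)) :
    (∃ x ≥ (0 : ℝ), v x ≠ 0) ∧ 0 < ∫ x in Set.Ioi (0 : ℝ), ‖v x‖ ^ 2 := by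
  constructor
  · by_contra! h
    have : (∫ x in Set.Ioi (0 : ℝ), ‖v x‖ ^ (p + 1)) = 0 := by
      apply setIntegral_eq_zero_of_forall_eq_zero
      intro x hx
      rw [h x (le_of_lt hx), norm_zero, Real.zero_rpow (by linarith)]
    linarith
  · have h0 : 0 ≤ ∫ x in Set.Ioi (0 : ℝ), ‖v x‖ ^ 2 := integral_nonneg fun x => by positivity
    refine lt_of_le_of_ne h0 fun h => ?_
    rw [eq_comm, integral_eq_zero_iff_of_nonneg (fun x => by positivity) hv.2.1] at h
    have : (∫ x in Set.Ioi (0 : ℝ), ‖v x‖ ^ (p + 1)) = 0 := by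
      apply integral_eq_zero_of_ae
      filter_upwards [h] with x hx
      have : ‖v x‖ = 0 := by simpa using hx
      simp only [this, Pi.zero_apply]
      exact Real.zero_rpow (by linarith)
    linarith

lemma nehari (p : ℝ) (hp : 5 < p) (N : ℕ) (hN : 2 ≤ N)
    (α ω : ℝ) (hα : α < 0) (hω : α ^ 2 / (N : ℝ) ^ 2 < ω) (d B0 : ℝ) (hB0 : 0 < B0)
    (hd : d = sInf {s : ℝ | ∃ v : ℝ → ℂ, MemA p v ∧ (∃ x ≥ (0 : ℝ), v x ≠ 0) ∧
      Ifun p α ω N v = 0 ∧ s = Sfun p α ω N v})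
    (hchar : d = (p - 1) / (2 * (p + 1)) * (N : ℝ) * B0)
    (w : ℝ → ℂ) (hw : MemA p w) (hB : (∫ x in Set.Ioi (0 : ℝ), ‖w x‖ ^ (p + 1)) = B0) :
    0 ≤ Ifun p α ω N w := by
  have hn : (0 : ℝ) < N := by positivity
  have hω0 : 0 < ω := lt_of_le_of_lt (by positivity) hω
  by_contra! hneg
  have hM := (nonzero_of_B p hp w hw (hB ▸ hB0)).2
  have htr := trace_ineq p w hw (√ω) (Real.sqrt_pos.mpr hω0)
  have hA : 0 ≤ ∫ x in Set.Ioi (0 : ℝ), ‖deriv w x‖ ^ 2 := integral_nonneg fun x => by positivity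
  set A := ∫ x in Set.Ioi (0 : ℝ), ‖deriv w x‖ ^ 2 with hAdef
  set M := ∫ x in Set.Ioi (0 : ℝ), ‖w x‖ ^ 2 with hMdef
  have hI : Ifun p α ω N w = N * (A + ω * M - B0) + α * ‖w 0‖ ^ 2 := by
    simp only [Ifun, hB, ← hAdef, ← hMdef]
  obtain ⟨K, hK⟩ : ∃ K, K = N * (A + ω * M) + α * ‖w 0‖ ^ 2 := ⟨_, rfl⟩
  have hKpos : 0 < K := by
    have hs : 0 < √ω := Real.sqrt_pos.mpr hω0
    have hss : √ω ^ 2 = ω := Real.sq_sqrt hω0.le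
    have h1 : -α < N * √ω := by
      rw [div_lt_iff₀ (by positivity)] at hω
      apply lt_of_pow_lt_pow_left₀ 2 (by positivity)
      rw [mul_pow, hss]; linarith
    have h2 : √ω * M + (√ω)⁻¹ * A = (√ω)⁻¹ * (A + ω * M) := by
      field_simp; rw [hss]; ring
    rw [h2] at htr
    have h3 : 0 < A + ω * M := by positivity
    have h4 : -α * ‖w 0‖ ^ 2 ≤ -α * ((√ω)⁻¹ * (A + ω * M)) :=
      mul_le_mul_of_nonneg_left htr (by linarith)
    have h5 : -α * ((√ω)⁻¹ * (A + ω * M)) < N * √ω * ((√ω)⁻¹ * (A + ω * M)) :=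
      mul_lt_mul_of_pos_right h1 (by positivity)
    have h6 : N * √ω * ((√ω)⁻¹ * (A + ω * M)) = N * (A + ω * M) := by field_simp
    rw [hK]; linarith
  have hKlt : K < N * B0 := by rw [hI] at hneg; rw [hK]; linarith
  obtain ⟨t, ht⟩ : ∃ t, t = (K / (N * B0)) ^ (1 / (p - 1)) := ⟨_, rfl⟩
  have hr0 : 0 < K / (N * B0) := by positivity
  have hr1 : K / (N * B0) < 1 := by rw [div_lt_one (by positivity)]; exact hKlt
  have ht0 : 0 < t := by rw [ht]; positivity
  have ht1 : t < 1 := by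
    rw [ht]; exact Real.rpow_lt_one hr0.le hr1 (by apply div_pos <;> linarith)
  have htp : t ^ (p - 1) = K / (N * B0) := by
    rw [ht, ← Real.rpow_mul hr0.le, one_div_mul_cancel (by linarith), Real.rpow_one]
  have htp1 : t ^ (p + 1) = t ^ 2 * (K / (N * B0)) := by
    rw [← htp, ← Real.rpow_natCast, ← Real.rpow_add ht0]; congr 1; push_cast; ring
  obtain ⟨hm, i2, id, ip⟩ := scale_facts p w hw t 1 ht0 one_pos
  have hBpos : 0 < ∫ x in Set.Ioi (0 : ℝ), ‖(t : ℂ) * w (1 * x)‖ ^ (p + 1) := by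
    rw [ip, hB]; positivity
  have hnz := (nonzero_of_B p hp _ hm hBpos).1
  have hn0 : ‖(t : ℂ) * w (1 * 0)‖ ^ 2 = t ^ 2 * ‖w 0‖ ^ 2 := by
    simp [mul_pow]
  have hI0 : Ifun p α ω N (fun x => (t : ℂ) * w (1 * x)) = 0 := by
    simp only [Ifun]
    rw [i2, id, ip, hB, hn0, ← hAdef, ← hMdef, htp1]
    have : (N : ℝ) * (t ^ 2 * (K / (N * B0)) * B0) = t ^ 2 * K := by field_simp
    rw [inv_one]
    linear_combination t ^ 2 * (-hK) - this
  have hS : ∀ v : ℝ → ℂ, Sfun p α ω N v = 1 / 2 * Ifun p α ω N v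
      + (p - 1) / (2 * (p + 1)) * (N : ℝ) * ∫ x in Set.Ioi (0 : ℝ), ‖v x‖ ^ (p + 1) := by
    intro v
    simp only [Sfun, Ifun]
    have : p + 1 ≠ 0 := by linarith
    field_simp; ring
  have hle : d ≤ Sfun p α ω N (fun x => (t : ℂ) * w (1 * x)) := by
    rw [hd]
    apply csInf_le
    · refine ⟨0, ?_⟩
      rintro s ⟨v, -, -, hv0, rfl⟩
      rw [hS, hv0]
      have : 0 ≤ ∫ x in Set.Ioi (0 : ℝ), ‖v x‖ ^ (p + 1) := integral_nonneg fun x => by positivity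
      have : 0 ≤ (p - 1) / (2 * (p + 1)) := by apply div_nonneg <;> linarith
      positivity
    · exact ⟨_, hm, hnz, hI0, rfl⟩
  rw [hS, hI0, ip, hB, hchar] at hle
  have hk : 0 < (p - 1) / (2 * (p + 1)) := by apply div_pos <;> linarith
  have hlt : t ^ (p + 1) * 1⁻¹ * B0 < B0 := by
    have : t ^ (p + 1) < 1 := Real.rpow_lt_one ht0.le ht1 (by linarith)
    rw [inv_one, mul_one]
    exact mul_lt_of_lt_one_left hB0 this
  have := mul_lt_mul_of_pos_left hlt (mul_pos hk hn)
  linarith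

lemma phi_facts (p ω b : ℝ) (hp : 5 < p) (hω : 0 < ω) (hb : 0 < b) (φ : ℝ → ℝ)
    (hφ : φ = fun x : ℝ => ((p + 1) * ω / 2 *
      (1 / Real.cosh ((p - 1) * Real.sqrt ω / 2 * x + b)) ^ 2) ^ (1 / (p - 1))) :
    0 < (∫ x in Set.Ioi (0 : ℝ), φ x ^ (p + 1)) ∧
    (∫ x in Set.Ioi (0 : ℝ), (deriv φ x) ^ 2) = ω * (∫ x in Set.Ioi (0 : ℝ), (φ x) ^ 2)
      - 2 / (p + 1) * (∫ x in Set.Ioi (0 : ℝ), φ x ^ (p + 1)) ∧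
    (∫ x in Set.Ioi (0 : ℝ), (deriv φ x) ^ 2) + ω * (∫ x in Set.Ioi (0 : ℝ), (φ x) ^ 2)
      - (∫ x in Set.Ioi (0 : ℝ), φ x ^ (p + 1)) = √ω * (Real.sinh b / Real.cosh b) * φ 0 ^ 2 := by
  have hs : 0 < √ω := Real.sqrt_pos.mpr hω
  have hss : √ω ^ 2 = ω := Real.sq_sqrt hω.le
  obtain ⟨k, hk⟩ : ∃ k, k = (p - 1) * √ω / 2 := ⟨_, rfl⟩
  have hk0 : 0 < k := by rw [hk]; apply div_pos (mul_pos (by linarith) hs) two_pos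
  obtain ⟨a, ha⟩ : ∃ a, a = (p + 1) * ω / 2 := ⟨_, rfl⟩
  have ha0 : 0 < a := by rw [ha]; apply div_pos (mul_pos (by linarith) hω) two_pos
  rw [← hk, ← ha] at hφ
  set T : ℝ → ℝ := fun x => Real.sinh (k * x + b) / Real.cosh (k * x + b) with hT
  set y : ℝ → ℝ := fun x => a * (1 / Real.cosh (k * x + b)) ^ 2 with hy
  have hy0 : ∀ x, 0 < y x := fun x => by
    have := Real.cosh_pos (k * x + b)
    simp only [hy]; positivity
  have hφy : ∀ x, φ x = y x ^ (1 / (p - 1)) := fun x => by rw [hφ]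
  have hφ0 : ∀ x, 0 < φ x := fun x => by rw [hφy]; exact Real.rpow_pos_of_pos (hy0 x) _
  have hyT : ∀ x, y x = a * (1 - T x ^ 2) := by
    intro x
    have hc := Real.cosh_pos (k * x + b)
    have := Real.cosh_sq (k * x + b)
    simp only [hy, hT]
    field_simp
    linarith
  have hφp1 : ∀ x, φ x ^ (p - 1) = y x := by
    intro x
    rw [hφy, ← Real.rpow_mul (hy0 x).le, one_div_mul_cancel (by linarith), Real.rpow_one]
  have hφp : ∀ x, φ x ^ (p + 1) = a * (1 - T x ^ 2) * φ x ^ 2 := by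
    intro x
    rw [← hyT, ← hφp1, ← Real.rpow_natCast (φ x) 2, ← Real.rpow_add (hφ0 x)]
    congr 1; push_cast; ring
  have hdl : ∀ x, HasDerivAt (fun x => k * x + b) k x := fun x => by
    simpa using ((hasDerivAt_id x).const_mul k).add_const b
  have hdT : ∀ x, HasDerivAt T (k * (1 - T x ^ 2)) x := by
    intro x
    have hc := Real.cosh_pos (k * x + b)
    have := ((hdl x).sinh).div ((hdl x).cosh) hc.ne'
    refine this.congr_deriv ?_
    simp only [hT]
    field_simp
  have hdy : ∀ x, HasDerivAt y (-(2 * k) * T x * y x) x := by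
    intro x
    have e : y = fun x => a * (1 - T x ^ 2) := funext hyT
    have := (((hdT x).pow 2).const_sub 1).const_mul a
    rw [hyT x, e]
    refine this.congr_deriv ?_
    push_cast; ring
  have hdφ : ∀ x, HasDerivAt φ (-√ω * T x * φ x) x := by
    intro x
    have e : φ = fun x => y x ^ (1 / (p - 1)) := funext hφy
    have := (hdy x).rpow_const (p := 1 / (p - 1)) (Or.inl (hy0 x).ne')
    rw [hφy x, e]
    refine this.congr_deriv ?_
    rw [Real.rpow_sub_one (hy0 x).ne']
    have h1 : p - 1 ≠ 0 := by linarith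
    have := (hy0 x).ne'
    rw [hk]; field_simp
  have hderiv : ∀ x, deriv φ x = -√ω * T x * φ x := fun x => (hdφ x).deriv
  have hT1 : ∀ x, T x ^ 2 < 1 := by
    intro x
    have h := hy0 x
    rw [hyT] at h
    have := (pos_iff_pos_of_mul_pos h).mp ha0
    linarith
  have hT0 : T 0 = Real.sinh b / Real.cosh b := by simp [hT]
  have hT0pos : 0 < T 0 := by
    rw [hT0]; exact div_pos (Real.sinh_pos_iff.mpr hb) (Real.cosh_pos b)
  have hTmono : Monotone T := by
    apply monotone_of_deriv_nonneg (fun x => (hdT x).differentiableAt)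
    intro x
    rw [(hdT x).deriv]
    have := hT1 x
    apply mul_nonneg hk0.le; linarith
  have hTge : ∀ x, 0 ≤ x → T 0 ≤ T x := fun x hx => hTmono hx
  have hcosh : Tendsto (fun x => Real.cosh (k * x + b)) atTop atTop := by
    have h1 : Tendsto (fun x => k * x + b) atTop atTop :=
      tendsto_atTop_add_const_right _ _ (tendsto_id.const_mul_atTop hk0)
    refine tendsto_atTop_mono (fun x => ?_) ((Real.tendsto_exp_atTop.comp h1).atTop_div_const two_pos)
    rw [Real.cosh_eq]
    have := Real.exp_pos (-(k * x + b))
    simp only [Function.comp]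
    linarith
  have hylim : Tendsto y atTop (𝓝 0) := by
    have h1 : Tendsto (fun x => 1 / Real.cosh (k * x + b)) atTop (𝓝 0) := by
      simp only [one_div]; exact hcosh.inv_tendsto_atTop
    have h2 := (h1.pow 2).const_mul a
    rw [zero_pow two_ne_zero, mul_zero] at h2
    exact h2
  have hφlim : Tendsto φ atTop (𝓝 0) := by
    have hr : 0 < 1 / (p - 1) := by apply div_pos one_pos; linarith
    have := hylim.rpow_const (p := 1 / (p - 1)) (Or.inr hr.le)
    rw [Real.zero_rpow hr.ne'] at this
    exact this.congr fun x => (hφy x).symm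
  have hcφ : Continuous φ := continuous_iff_continuousAt.mpr fun x => (hdφ x).continuousAt
  have hcT : Continuous T := continuous_iff_continuousAt.mpr fun x => (hdT x).continuousAt
  have hdφ2 : ∀ x, HasDerivAt (fun x => φ x ^ 2) (-(2 * √ω) * T x * φ x ^ 2) x := by
    intro x
    refine ((hdφ x).pow 2).congr_deriv ?_
    push_cast; ring
  have hi1 : IntegrableOn (fun x => -(2 * √ω) * T x * φ x ^ 2) (Ioi 0) := by
    refine integrableOn_Ioi_deriv_of_nonpos' (fun x _ => hdφ2 x) ?_ (l := 0) (by simpa using hφlim.pow 2)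
    intro x hx
    have h1 := hTge x (le_of_lt hx)
    have : 0 ≤ T x := by linarith
    have : 0 ≤ 2 * √ω * T x * φ x ^ 2 := by positivity
    linarith
  have hi2 : IntegrableOn (fun x => φ x ^ 2) (Ioi 0) := by
    refine Integrable.mono' (hi1.const_mul (-(2 * √ω * T 0)⁻¹)) (by fun_prop) ?_
    refine (ae_restrict_mem measurableSet_Ioi).mono fun x hx => ?_
    have h1 := hTge x (le_of_lt hx)
    rw [Real.norm_of_nonneg (by positivity)]
    have : -(2 * √ω * T 0)⁻¹ * (-(2 * √ω) * T x * φ x ^ 2) = T x / T 0 * φ x ^ 2 := by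
      field_simp
    rw [this]
    have : 1 ≤ T x / T 0 := by rwa [one_le_div hT0pos]
    nlinarith [sq_nonneg (φ x)]
  have hi3 : IntegrableOn (fun x => T x ^ 2 * φ x ^ 2) (Ioi 0) := by
    refine Integrable.mono' hi2 (by fun_prop) (Eventually.of_forall fun x => ?_)
    rw [Real.norm_of_nonneg (by positivity)]
    exact mul_le_of_le_one_left (by positivity) (hT1 x).le
  set M := ∫ x in Ioi (0 : ℝ), φ x ^ 2 with hM
  obtain ⟨Q, hQ⟩ : ∃ Q, Q = ∫ x in Ioi (0 : ℝ), T x ^ 2 * φ x ^ 2 := ⟨_, rfl⟩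
  have iA : (∫ x in Ioi (0 : ℝ), (deriv φ x) ^ 2) = ω * Q := by
    rw [hQ, ← integral_const_mul]
    congr 1; funext x
    rw [hderiv]; linear_combination (T x ^ 2 * φ x ^ 2) * hss
  have iB : (∫ x in Ioi (0 : ℝ), φ x ^ (p + 1)) = a * (M - Q) := by
    rw [hQ, hM, ← integral_sub hi2 hi3, ← integral_const_mul]
    congr 1; funext x
    rw [hφp]; ring
  have hlimT : Tendsto (fun x => -√ω * T x * φ x ^ 2) atTop (𝓝 0) := by
    have h2 : Tendsto (fun x => √ω * φ x ^ 2) atTop (𝓝 0) := by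
      simpa using (hφlim.pow 2).const_mul √ω
    refine squeeze_zero_norm (fun x => ?_) h2
    have hT' : |T x| ≤ 1 := by
      rw [← sq_le_one_iff_abs_le_one]; exact (hT1 x).le
    rw [Real.norm_eq_abs, abs_mul, abs_mul, abs_neg, abs_of_pos hs, abs_of_nonneg (sq_nonneg (φ x))]
    have : 0 ≤ √ω * φ x ^ 2 := by positivity
    nlinarith
  have hdg : ∀ x ∈ Ici (0 : ℝ), HasDerivAt (fun x => -√ω * T x * φ x ^ 2)
      ((-√ω * k) * φ x ^ 2 + (√ω * k + 2 * ω) * (T x ^ 2 * φ x ^ 2)) x := by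
    intro x _
    refine (((hdT x).const_mul (-√ω)).mul (hdφ2 x)).congr_deriv ?_
    linear_combination 2 * (T x ^ 2 * φ x ^ 2) * hss
  have hitg := integral_Ioi_of_hasDerivAt_of_tendsto' hdg
    ((hi2.const_mul _).add (hi3.const_mul _)) hlimT
  rw [integral_add (hi2.const_mul _) (hi3.const_mul _), integral_const_mul, integral_const_mul,
    ← hM, ← hQ] at hitg
  have hsk : √ω * k = (p - 1) / 2 * ω := by rw [hk]; linear_combination (p - 1) / 2 * hss
  refine ⟨?_, ?_, ?_⟩
  · have hi4 : IntegrableOn (fun x => φ x ^ (p + 1)) (Ioi 0) := by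
      have : (fun x => φ x ^ (p + 1)) = fun x => a * (φ x ^ 2 - T x ^ 2 * φ x ^ 2) := by
        funext x; rw [hφp]; ring
      rw [this]
      exact (hi2.sub hi3).const_mul a
    have hpos : ∀ x, 0 < φ x ^ (p + 1) := fun x => Real.rpow_pos_of_pos (hφ0 x) _
    rw [setIntegral_pos_iff_support_of_nonneg_ae (Eventually.of_forall fun x => (hpos x).le) hi4]
    have : Function.support (fun x => φ x ^ (p + 1)) = univ := by
      ext x; simp [(hpos x).ne']
    rw [this]; simp
  · rw [iA, iB, ha]
    have : p + 1 ≠ 0 := by linarith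
    field_simp; ring
  · rw [iA, iB, ha, ← hT0]
    linear_combination hitg + (M - Q) * hsk

lemma tanh_arctanh_aux (z : ℝ) (h1 : -1 < z) (h2 : z < 0) :
    0 < - arctanh z ∧ Real.sinh (- arctanh z) / Real.cosh (- arctanh z) = - z := by
  have e : arctanh z = Real.artanh z := by
    rw [Real.artanh_eq_half_log ⟨h1.le, by linarith⟩, arctanh]; ring
  rw [e]
  refine ⟨by linarith [Real.artanh_neg (x := z) ⟨h1, h2⟩], ?_⟩
  rw [← Real.tanh_eq_sinh_div_cosh, Real.tanh_neg, Real.tanh_artanh ⟨h1, by linarith⟩]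

/-- Key comparison lemma in the attractive case `α < 0`: if `v` in the admissible class
has mass at most that of the ground state `φ`, strictly larger `L^{p+1}`-norm, and
`P(v) ≤ 0`, then `d ≤ S_ω(v) − (1/2)P(v)`, assuming the variational characterization of
`d` and the second-derivative condition for `φ`. -/
theorem key_comparison_lemma (p : ℝ) (hp : 5 < p) (N : ℕ) (hN : 2 ≤ N)
    (α ω : ℝ) (hα : α < 0) (hω : α ^ 2 / (N : ℝ) ^ 2 < ω)
    (φ : ℝ → ℝ)
    (hφ : φ = fun x : ℝ => ((p + 1) * ω / 2 *
      (1 / Real.cosh ((p - 1) * Real.sqrt ω / 2 * x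
        - arctanh (α / ((N : ℝ) * Real.sqrt ω)))) ^ 2) ^ (1 / (p - 1)))
    (d : ℝ)
    (hd : d = sInf {s : ℝ | ∃ v : ℝ → ℂ, MemA p v ∧ (∃ x ≥ (0 : ℝ), v x ≠ 0) ∧
      Ifun p α ω N v = 0 ∧ s = Sfun p α ω N v})
    (hchar : d = (p - 1) / (2 * (p + 1)) * (N : ℝ) * ∫ x in Set.Ioi (0 : ℝ), φ x ^ (p + 1))
    (hsecond : (∫ x in Set.Ioi (0 : ℝ), (deriv φ x) ^ 2)
      ≤ (p - 1) * (p - 3) / (4 * (p + 1)) * ∫ x in Set.Ioi (0 : ℝ), φ x ^ (p + 1)) :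
    ∀ v : ℝ → ℂ, MemA p v →
      (∫ x in Set.Ioi (0 : ℝ), ‖v x‖ ^ 2) ≤ (∫ x in Set.Ioi (0 : ℝ), (φ x) ^ 2) →
      (∫ x in Set.Ioi (0 : ℝ), φ x ^ (p + 1)) < (∫ x in Set.Ioi (0 : ℝ), ‖v x‖ ^ (p + 1)) →
      Pfun p α N v ≤ 0 →
      d ≤ Sfun p α ω N v - (1 / 2) * Pfun p α N v := by
  intro v hv hM hB hP
  have hn : (0 : ℝ) < N := by positivity
  have hω0 : 0 < ω := lt_of_le_of_lt (by positivity) hω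
  have hs : 0 < √ω := Real.sqrt_pos.mpr hω0
  have hss : √ω ^ 2 = ω := Real.sq_sqrt hω0.le
  have hz1 : -1 < α / ((N : ℝ) * Real.sqrt ω) := by
    rw [lt_div_iff₀ (by positivity)]
    have : -α < N * √ω := by
      rw [div_lt_iff₀ (by positivity)] at hω
      apply lt_of_pow_lt_pow_left₀ 2 (by positivity)
      rw [mul_pow, hss]; linarith
    linarith
  have hz2 : α / ((N : ℝ) * Real.sqrt ω) < 0 := div_neg_of_neg_of_pos hα (by positivity)
  obtain ⟨hb, htanh⟩ := tanh_arctanh_aux _ hz1 hz2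
  obtain ⟨hB0, e1, e2⟩ := phi_facts p ω _ hp hω0 hb φ (by simpa only [sub_eq_add_neg] using hφ)
  rw [htanh] at e2
  set A0 := ∫ x in Set.Ioi (0 : ℝ), (deriv φ x) ^ 2
  set M0 := ∫ x in Set.Ioi (0 : ℝ), (φ x) ^ 2
  set B0 := ∫ x in Set.Ioi (0 : ℝ), φ x ^ (p + 1)
  have e2' : (N : ℝ) * (A0 + ω * M0 - B0) + α * φ 0 ^ 2 = 0 := by
    rw [e2]; field_simp; ring
  set A := ∫ x in Set.Ioi (0 : ℝ), ‖deriv v x‖ ^ 2 with hAd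
  set M := ∫ x in Set.Ioi (0 : ℝ), ‖v x‖ ^ 2 with hMd
  set B := ∫ x in Set.Ioi (0 : ℝ), ‖v x‖ ^ (p + 1) with hBd
  have hBpos : 0 < B := hB0.trans hB
  obtain ⟨q, hq⟩ : ∃ q, q = (p - 1) / 2 := ⟨_, rfl⟩
  have hpq : p = 2 * q + 1 := by rw [hq]; ring
  have hq2 : 2 < q := by rw [hq]; linarith
  obtain ⟨l, hl⟩ : ∃ l, l = (B0 / B) ^ (1 / q) := ⟨_, rfl⟩
  have hr0 : 0 < B0 / B := by positivity
  have hl0 : 0 < l := by rw [hl]; positivity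
  have hl1 : l ≤ 1 := by
    rw [hl]; exact Real.rpow_le_one hr0.le ((div_le_one hBpos).mpr hB.le) (by positivity)
  have hlq : l ^ q = B0 / B := by
    rw [hl, ← Real.rpow_mul hr0.le, one_div_mul_cancel (by linarith), Real.rpow_one]
  have hlR : l * l ^ (q - 1) = B0 / B := by
    rw [← hlq, Real.rpow_sub_one hl0.ne']; field_simp
  have hBl : B0 = l * l ^ (q - 1) * B := by rw [hlR]; field_simp
  have hc0 : 0 < √l := Real.sqrt_pos.mpr hl0
  have hcc : √l ^ 2 = l := Real.sq_sqrt hl0.le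
  obtain ⟨hm, i2, id, ip⟩ := scale_facts p v hv (√l) l hc0 hl0
  have hcp : √l ^ (p + 1) * l⁻¹ = B0 / B := by
    rw [Real.sqrt_eq_rpow, ← Real.rpow_mul hl0.le, ← Real.rpow_neg_one l, ← Real.rpow_add hl0, ← hlq]
    congr 1; rw [hpq]; ring
  rw [← hBd, hcp, div_mul_cancel₀ _ hBpos.ne'] at ip
  rw [← hMd, hcc, mul_inv_cancel₀ hl0.ne', one_mul] at i2
  rw [← hAd, hcc] at id
  have hI := nehari p hp N hN α ω hα hω d B0 hB0 hd hchar _ hm ip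
  have hn0 : ‖((√l : ℝ) : ℂ) * v (l * 0)‖ ^ 2 = l * ‖v 0‖ ^ 2 := by
    rw [norm_mul, mul_pow, mul_zero, Complex.norm_real, Real.norm_of_nonneg hc0.le, hcc]
  simp only [Ifun] at hI
  rw [i2, id, ip, hn0, ← pow_two] at hI
  simp only [Pfun, ← hAd, ← hBd] at hP
  simp only [Sfun, Pfun, ← hAd, ← hBd, ← hMd]
  have g1 : (p - 1) / (2 * (p + 1)) = q / (2 * q + 2) := by
    have : q + 1 ≠ 0 := by linarith
    rw [hpq]; field_simp; ring
  have g2 : (p - 1) * (p - 3) / (4 * (p + 1)) = q * (q - 1) / (2 * q + 2) := by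
    have : q + 1 ≠ 0 := by linarith
    rw [hpq]; field_simp; ring
  have g3 : 2 / (p + 1) = 1 / (q + 1) := by
    have : q + 1 ≠ 0 := by linarith
    rw [hpq]; field_simp; ring
  have g4 : p + 1 = 2 * q + 2 := by rw [hpq]; ring
  rw [g1] at hP hchar
  rw [g2] at hsecond
  rw [g3] at e1
  rw [g1, hchar, g4]
  exact calc_final q l (l ^ (q - 1)) A A0 M M0 B B0 (‖v 0‖ ^ 2) (φ 0 ^ 2) α ω N hq2 hl0 hl1 hn hω0
    (calc_F q l hq2 hl0 hl1) hBpos hBl e1 e2' hsecond hM hI hP
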